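/- arXiv:1403.5341 — 2 statements merged into one kernel-verified Lean document; each statement's English description precedes it below -/
import Mathlib

section
/- Assume sup_{y∈𝒴} R(y) − inf_{y∈𝒴} R(y) ≤ 1, and assume full information: there is a finite set 𝒵 and a random variable Z : Ω → 𝒵 such that 𝒴 = 𝒜 × 𝒵 and Y_a = (a, Z) for every a ∈ 𝒜. Then ( E[R(Y_{A*}) − R(Y_A)] )² ≤ (1/2) · I(A*; (A, Y_A)), i.e. the information ratio of Thompson sampling is at most 1/2. -/
open MeasureTheory ProbabilityTheory Real

/-- Mutual information between two finitely-valued random variables `X` and `Z`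
under the measure `μ`: the Kullback--Leibler divergence between the joint law
of `(X, Z)` and the product of the marginal laws. -/
noncomputable def mutualInfo {Ω : Type*} [MeasurableSpace Ω] (μ : Measure Ω)
    {𝒳 𝒵 : Type*} [Fintype 𝒳] [Fintype 𝒵] (X : Ω → 𝒳) (Z : Ω → 𝒵) : ℝ :=
  ∑ x : 𝒳, ∑ z : 𝒵,
    (μ {ω | X ω = x ∧ Z ω = z}).toReal *
      Real.log ((μ {ω | X ω = x ∧ Z ω = z}).toReal /
        ((μ {ω | X ω = x}).toReal * (μ {ω | Z ω = z}).toReal))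

lemma aux_integral {Ω : Type*} [MeasurableSpace Ω] (μ : Measure Ω) [IsProbabilityMeasure μ]
    {W : Type*} [Fintype W] [MeasurableSpace W] [MeasurableSingletonClass W]
    (X : Ω → W) (hX : Measurable X) (f : W → ℝ) :
    ∫ ω, f (X ω) ∂μ = ∑ w, (μ {ω | X ω = w}).toReal * f w := by
  have hf : Measurable f := measurable_of_finite f
  have : IsProbabilityMeasure (μ.map X) := Measure.isProbabilityMeasure_map hX.aemeasurable
  rw [← integral_map hX.aemeasurable hf.aestronglyMeasurable,
    integral_fintype Integrable.of_finite]
  refine Finset.sum_congr rfl fun w _ => ?_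
  rw [smul_eq_mul, Measure.real, Measure.map_apply hX (measurableSet_singleton w)]
  rfl

lemma aux_gibbs (p v g : ℝ) (hp : 0 ≤ p) (hv : 0 ≤ v) (h0 : v = 0 → p = 0) :
    p * g - p * Real.log (p / v) ≤ v * Real.exp g - p := by
  rcases hp.eq_or_lt with h | h
  · subst h
    simp
    positivity
  · have hv' : 0 < v := lt_of_le_of_ne hv (fun e => h.ne' (h0 e.symm))
    have hd : 0 < p / v := div_pos h hv'
    have h1 := Real.add_one_le_exp (g - Real.log (p / v))
    rw [Real.exp_sub, Real.exp_log hd] at h1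
    have h2 := mul_le_mul_of_nonneg_left h1 hp
    have h3 : p * (Real.exp g / (p / v)) = v * Real.exp g := by
      field_simp
    rw [h3] at h2
    linarith

/-- **Proposition 4** (information ratio under full information). If rewards
have range of width at most one and the outcome space is `𝒴 = 𝒜 × 𝒵` with
`Y_a = (a, Z)` for a single random variable `Z` (so any selected action fully
reveals the outcome of every other action), then under Thompson sampling
`(E[R(Y_{A*}) − R(Y_A)])² ≤ (1/2) · I(A*; (A, Y_A))`. -/
theorem information_ratio_le_half_of_full_information
    {Ω : Type*} [MeasurableSpace Ω] (μ : Measure Ω) [IsProbabilityMeasure μ]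
    {𝒜 𝒵 : Type*} [Fintype 𝒜] [Nonempty 𝒜] [Fintype 𝒵] [Nonempty 𝒵]
    [MeasurableSpace 𝒜] [MeasurableSingletonClass 𝒜]
    [MeasurableSpace 𝒵] [MeasurableSingletonClass 𝒵]
    (Y : 𝒜 → Ω → 𝒜 × 𝒵) (Astar A : Ω → 𝒜) (Z : Ω → 𝒵) (R : 𝒜 × 𝒵 → ℝ)
    (hR : (⨆ y, R y) - (⨅ y, R y) ≤ 1)
    (hfull : ∀ a ω, Y a ω = (a, Z ω))
    (hYmeas : ∀ a, Measurable (Y a)) (hAstarMeas : Measurable Astar)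
    (hAMeas : Measurable A)
    (hmatch : ∀ a : 𝒜, μ {ω | A ω = a} = μ {ω | Astar ω = a})
    (hindep : IndepFun A (fun ω => (Astar ω, fun a => Y a ω)) μ) :
    (∫ ω, (R (Y (Astar ω) ω) - R (Y (A ω) ω)) ∂μ) ^ 2 ≤
      (1 / 2 : ℝ) * mutualInfo μ Astar (fun ω => (A ω, Y (A ω) ω)) := by
  classical
  have hZ : Measurable Z := by
    have h := measurable_snd.comp (hYmeas (Classical.arbitrary 𝒜))
    have e : (Prod.snd ∘ Y (Classical.arbitrary 𝒜)) = Z := by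
      funext ω
      simp [hfull]
    rwa [e] at h
  set q : 𝒜 → ℝ := fun a => (μ {ω | Astar ω = a}).toReal with hq
  set r : 𝒵 → ℝ := fun z => (μ {ω | Z ω = z}).toReal with hr
  set p : 𝒜 × 𝒵 → ℝ := fun w => (μ {ω | (Astar ω, Z ω) = w}).toReal with hp
  have hind : IndepFun A (fun ω => (Astar ω, Z ω)) μ := by
    have := hindep.comp (φ := id) (ψ := fun x : 𝒜 × (𝒜 → 𝒜 × 𝒵) =>
      (x.1, (x.2 (Classical.arbitrary 𝒜)).2)) measurable_id (by fun_prop)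
    have e : ((fun x : 𝒜 × (𝒜 → 𝒜 × 𝒵) => (x.1, (x.2 (Classical.arbitrary 𝒜)).2)) ∘
        fun ω => (Astar ω, fun a => Y a ω)) = fun ω => (Astar ω, Z ω) := by
      funext ω
      simp [hfull]
    rw [e] at this
    exact this
  have hind3 : ∀ a b z, (μ {ω | A ω = a ∧ (Astar ω, Z ω) = (b, z)}).toReal
      = q a * p (b, z) := by
    intro a b z
    have := hind.measure_inter_preimage_eq_mul {a} {(b, z)} (measurableSet_singleton _)
      (measurableSet_singleton _)
    have h2 : (μ (A ⁻¹' {a} ∩ (fun ω => (Astar ω, Z ω)) ⁻¹' {(b, z)})).toReal = q a * p (b, z) := by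
      rw [this, ENNReal.toReal_mul, hq, hp]
      simp only [← hmatch]
      rfl
    exact h2
  have hindZ : ∀ a z, (μ {ω | (A ω, Z ω) = (a, z)}).toReal = q a * r z := by
    intro a z
    have hi : IndepFun A Z μ := hind.comp (φ := id) measurable_id measurable_snd
    have := hi.measure_inter_preimage_eq_mul {a} {z} (measurableSet_singleton _)
      (measurableSet_singleton _)
    have h2 : (μ (A ⁻¹' {a} ∩ Z ⁻¹' {z})).toReal = q a * r z := by
      rw [this, ENNReal.toReal_mul, hq, hr]
      simp only [← hmatch]
      rfl
    rw [← h2]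
    congr 2
    ext ω
    simp
  have hAZ : Measurable fun ω => (A ω, Z ω) := hAMeas.prodMk hZ
  have hSZ : Measurable fun ω => (Astar ω, Z ω) := hAstarMeas.prodMk hZ
  have hqsum : ∑ a, q a = 1 := by
    have := aux_integral μ Astar hAstarMeas (fun _ => 1)
    simpa using this.symm
  have hpsum : ∑ w, p w = 1 := by
    have := aux_integral μ _ hSZ (fun _ => 1)
    simpa using this.symm
  have hp0 : ∀ w, 0 ≤ p w := fun w => ENNReal.toReal_nonneg
  have hq0 : ∀ w, 0 ≤ q w := fun w => ENNReal.toReal_nonneg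
  have hr0 : ∀ w, 0 ≤ r w := fun w => ENNReal.toReal_nonneg
  have hpq : ∀ w, p w ≤ q w.1 := fun w => by
    refine ENNReal.toReal_mono (measure_ne_top _ _) (measure_mono ?_)
    rintro ω h
    simp only [Set.mem_ofPred_eq] at h ⊢
    rw [← h]
  have hpr : ∀ w, p w ≤ r w.2 := fun w => by
    refine ENNReal.toReal_mono (measure_ne_top _ _) (measure_mono ?_)
    rintro ω h
    simp only [Set.mem_ofPred_eq] at h ⊢
    rw [← h]
  -- the mutual information is that of `Astar` and `Z`
  have hI : mutualInfo μ Astar (fun ω => (A ω, Y (A ω) ω))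
      = ∑ w, p w * Real.log (p w / (q w.1 * r w.2)) := by
    unfold mutualInfo
    rw [Fintype.sum_prod_type]
    refine Finset.sum_congr rfl fun b _ => ?_
    rw [Fintype.sum_prod_type]
    have key : ∀ a, (∑ y : 𝒜 × 𝒵, (μ {ω | Astar ω = b ∧ (A ω, Y (A ω) ω) = (a, y)}).toReal *
        Real.log ((μ {ω | Astar ω = b ∧ (A ω, Y (A ω) ω) = (a, y)}).toReal /
        ((μ {ω | Astar ω = b}).toReal * (μ {ω | (A ω, Y (A ω) ω) = (a, y)}).toReal)))
        = q a * ∑ z, p (b, z) * Real.log (p (b, z) / (q b * r z)) := by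
      intro a
      rw [Fintype.sum_prod_type, Finset.sum_eq_single a]
      · rw [Finset.mul_sum]
        refine Finset.sum_congr rfl fun z _ => ?_
        have e1 : {ω | Astar ω = b ∧ (A ω, Y (A ω) ω) = (a, (a, z))}
            = {ω | A ω = a ∧ (Astar ω, Z ω) = (b, z)} := by
          ext ω
          simp only [hfull, Set.mem_ofPred_eq, Prod.mk.injEq]
          tauto
        have e2 : {ω | (A ω, Y (A ω) ω) = (a, (a, z))} = {ω | (A ω, Z ω) = (a, z)} := by
          ext ω
          simp only [hfull, Set.mem_ofPred_eq, Prod.mk.injEq]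
          tauto
        rw [e1, e2, hind3, hindZ]
        rcases (hq0 a).eq_or_lt with h | h
        · rw [← h]; simp
        · have : q a * p (b, z) / ((μ {ω | Astar ω = b}).toReal * (q a * r z))
              = p (b, z) / (q b * r z) := by
            change q a * p (b, z) / (q b * (q a * r z)) = _
            rw [mul_left_comm, mul_div_mul_left _ _ h.ne']
          rw [this, mul_assoc]
      · intro c _ hc
        refine Finset.sum_eq_zero fun z _ => ?_
        have e1 : {ω | Astar ω = b ∧ (A ω, Y (A ω) ω) = (a, (c, z))} = ∅ := by
          ext ω
          simp only [hfull, Set.mem_ofPred_eq, Prod.mk.injEq, Set.mem_empty_iff_false, iff_false]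
          rintro ⟨_, h1, h2, _⟩
          exact hc (h2.symm.trans h1)
        rw [e1]; simp
      · simp
    rw [Finset.sum_congr rfl fun a _ => key a, ← Finset.sum_mul, hqsum, one_mul]
  rw [hI]
  set K := ∑ w, p w * Real.log (p w / (q w.1 * r w.2)) with hK
  set m := ∫ ω, R (A ω, Z ω) ∂μ with hm
  set D := ∫ ω, (R (Y (Astar ω) ω) - R (Y (A ω) ω)) ∂μ with hD
  have hbd : ∀ w, R w ∈ Set.Icc (⨅ y, R y) (⨆ y, R y) := fun w =>
    ⟨ciInf_le (Set.finite_range R).bddBelow w, le_ciSup (Set.finite_range R).bddAbove w⟩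
  have hRint : ∀ X : Ω → 𝒜 × 𝒵, Measurable X → Integrable (fun ω => R (X ω)) μ := fun X hX =>
    Integrable.of_mem_Icc _ _ ((measurable_of_finite R).comp hX).aemeasurable
      (ae_of_all _ fun ω => hbd _)
  have hDeq : D = (∑ w, p w * R w) - m := by
    rw [hD]
    simp only [hfull]
    rw [integral_sub (hRint _ hSZ) (hRint _ hAZ), aux_integral μ _ hSZ R]
  have hD2 : D = ∑ w, p w * (R w - m) := by
    rw [hDeq]
    simp only [mul_sub, Finset.sum_sub_distrib]
    rw [← Finset.sum_mul, hpsum, one_mul]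
  have hmgf : ∑ w : 𝒜 × 𝒵, (q w.1 * r w.2) * Real.exp (4 * D * (R w - m))
      ≤ Real.exp (2 * D ^ 2) := by
    have hs := hasSubgaussianMGF_of_mem_Icc (μ := μ) (X := fun ω => R (A ω, Z ω))
      ((measurable_of_finite R).comp hAZ).aemeasurable (ae_of_all _ fun ω => hbd (A ω, Z ω))
    have h1 := hs.mgf_le (4 * D)
    have h2 : mgf (fun ω => R (A ω, Z ω) - m) μ (4 * D)
        = ∑ w : 𝒜 × 𝒵, (q w.1 * r w.2) * Real.exp (4 * D * (R w - m)) := by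
      rw [mgf, aux_integral μ _ hAZ (fun w => Real.exp (4 * D * (R w - m)))]
      refine Finset.sum_congr rfl fun w _ => ?_
      rw [← hindZ w.1 w.2]
    rw [← h2]
    refine h1.trans (Real.exp_le_exp.2 ?_)
    have hle : 0 ≤ (⨆ y, R y) - (⨅ y, R y) := by
      have := hbd (Classical.arbitrary _)
      linarith [this.1, this.2]
    have hsq : ((⨆ y, R y) - (⨅ y, R y)) ^ 2 ≤ 1 := by nlinarith
    push_cast
    rw [Real.norm_eq_abs, div_pow, sq_abs]
    nlinarith [sq_nonneg D]
  have hsum := Finset.sum_le_sum (s := Finset.univ) fun (w : 𝒜 × 𝒵) _ =>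
    aux_gibbs (p w) (q w.1 * r w.2) (4 * D * (R w - m) - 2 * D ^ 2) (hp0 w)
      (mul_nonneg (hq0 _) (hr0 _)) (fun h => by
        rcases mul_eq_zero.1 h with h | h
        · exact le_antisymm (h ▸ hpq w) (hp0 w)
        · exact le_antisymm (h ▸ hpr w) (hp0 w))
  rw [Finset.sum_sub_distrib, Finset.sum_sub_distrib, hpsum, ← hK] at hsum
  have hL : ∑ w, p w * (4 * D * (R w - m) - 2 * D ^ 2) = 4 * D * D - 2 * D ^ 2 := by
    have : ∀ w, p w * (4 * D * (R w - m) - 2 * D ^ 2)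
        = 4 * D * (p w * (R w - m)) - p w * (2 * D ^ 2) := fun w => by ring
    simp only [this]
    rw [Finset.sum_sub_distrib, ← Finset.mul_sum, ← Finset.sum_mul, hpsum, ← hD2, one_mul]
  have hRt : ∑ w : 𝒜 × 𝒵, q w.1 * r w.2 * Real.exp (4 * D * (R w - m) - 2 * D ^ 2) ≤ 1 := by
    simp only [Real.exp_sub, ← mul_div_assoc]
    rw [← Finset.sum_div, div_le_one (Real.exp_pos _)]
    exact hmgf
  rw [hL] at hsum
  nlinarith
end

section
/- The expected regret of Thompson sampling satisfies Σ_{t=1}^{T} E[ R(Y_{t,A*}) − R(Y_{t,A_t}) ] ≤ √( |𝒜| · H(A*) · T / 2 ). -/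
open MeasureTheory ProbabilityTheory Real

/-- Shannon entropy of a random variable `X` with values in a finite set,
under the measure `μ`. -/
noncomputable def entropy {Ω : Type*} [MeasurableSpace Ω] (μ : Measure Ω)
    {𝒳 : Type*} [Fintype 𝒳] (X : Ω → 𝒳) : ℝ :=
  ∑ x : 𝒳, Real.negMulLog (μ {ω | X ω = x}).toReal

lemma pinsker_fin {𝒴 : Type*} [Fintype 𝒴] (R : 𝒴 → ℝ) (l : ℝ)
    (hR : ∀ y, R y ∈ Set.Icc l (l + 1)) (p q : 𝒴 → ℝ) (hp : ∀ y, 0 ≤ p y)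
    (hq : ∀ y, 0 ≤ q y) (hp1 : ∑ y, p y = 1) (hq1 : ∑ y, q y = 1)
    (hac : ∀ y, q y = 0 → p y = 0) :
    (∑ y, R y * p y - ∑ y, R y * q y) ^ 2 ≤
      1 / 2 * ∑ y, p y * (Real.log (p y) - Real.log (q y)) := by
  let _ : MeasurableSpace 𝒴 := ⊤
  have _ : MeasurableSingletonClass 𝒴 := ⟨fun _ => trivial⟩
  set E := ∑ y, R y * q y with hE
  set d := ∑ y, R y * p y - E with hd
  let Q : PMF 𝒴 := PMF.ofFintype (fun y => ENNReal.ofReal (q y)) (by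
    rw [← ENNReal.ofReal_sum_of_nonneg (fun y _ => hq y), hq1, ENNReal.ofReal_one])
  have hint : ∀ f : 𝒴 → ℝ, ∫ y, f y ∂Q.toMeasure = ∑ y, q y * f y := by
    intro f
    rw [PMF.integral_eq_sum]
    refine Finset.sum_congr rfl fun y _ => ?_
    simp [Q, ENNReal.toReal_ofReal (hq y)]
  have hoeff : ∀ s : ℝ, ∑ y, q y * Real.exp (s * (R y - E)) ≤ Real.exp (s ^ 2 / 8) := by
    intro s
    have h := hasSubgaussianMGF_of_mem_Icc (μ := Q.toMeasure) (X := R) (a := l) (b := l + 1)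
      (measurable_from_top.aemeasurable) (Filter.Eventually.of_forall hR)
    have h2 := h.mgf_le s
    rw [mgf, hint, hint] at h2
    have hE' : ∑ y, q y * R y = E := by simp [hE, mul_comm]
    rw [hE'] at h2
    refine h2.trans (le_of_eq ?_)
    congr 1
    simp
    ring
  have key : ∀ y, p y * (4 * d * (R y - E) - 2 * d ^ 2) + p y
      - q y * Real.exp (4 * d * (R y - E)) * Real.exp (- (2 * d ^ 2))
      ≤ p y * (Real.log (p y) - Real.log (q y)) := by
    intro y
    rcases eq_or_lt_of_le (hp y) with h0 | h0
    · rw [← h0]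
      have := hq y
      simp
      positivity
    · have hq0 : 0 < q y := lt_of_le_of_ne (hq y) (fun h => by
        have := hac y h.symm; linarith)
      set f := 4 * d * (R y - E) - 2 * d ^ 2 with hf
      have hx : 0 < q y * Real.exp f / p y := by positivity
      have := Real.log_le_sub_one_of_pos hx
      rw [Real.log_div (by positivity) (by positivity), Real.log_mul (by positivity) (by positivity),
        Real.log_exp] at this
      have h3 := mul_le_mul_of_nonneg_left this h0.le
      have h4 : p y * (q y * Real.exp f / p y - 1) = q y * Real.exp f - p y := by
        field_simp
      rw [mul_assoc, ← Real.exp_add]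
      have h5 : 4 * d * (R y - E) + -(2 * d ^ 2) = f := by rw [hf]; ring
      rw [h5]
      nlinarith
  have hsum := Finset.sum_le_sum (fun y (_ : y ∈ Finset.univ) => key y)
  rw [Finset.sum_sub_distrib, Finset.sum_add_distrib, hp1, ← Finset.sum_mul] at hsum
  have h6 : ∑ y, p y * (4 * d * (R y - E) - 2 * d ^ 2) = 2 * d ^ 2 := by
    have : ∀ y, p y * (4 * d * (R y - E) - 2 * d ^ 2) =
        4 * d * (R y * p y) - (4 * d * E + 2 * d ^ 2) * p y := fun y => by ring
    simp_rw [this]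
    rw [Finset.sum_sub_distrib, ← Finset.mul_sum, ← Finset.mul_sum, hp1]
    have : ∑ y, R y * p y = d + E := by rw [hd]; ring
    rw [this]; ring
  have h7 : (∑ y, q y * Real.exp (4 * d * (R y - E))) * Real.exp (- (2 * d ^ 2)) ≤ 1 := by
    calc _ ≤ Real.exp ((4 * d) ^ 2 / 8) * Real.exp (- (2 * d ^ 2)) := by
          gcongr; exact hoeff _
      _ = 1 := by rw [← Real.exp_add, ← Real.exp_zero]; congr 1; ring
  linarith

/-- unnormalized version -/
lemma pinsker_fin' {𝒴 : Type*} [Fintype 𝒴] (R : 𝒴 → ℝ) (l : ℝ)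
    (hR : ∀ y, R y ∈ Set.Icc l (l + 1)) (p q : 𝒴 → ℝ) (c : ℝ) (hp : ∀ y, 0 ≤ p y)
    (hq : ∀ y, 0 ≤ q y) (hp1 : ∑ y, p y = c) (hq1 : ∑ y, q y = 1)
    (hac : ∀ y, q y = 0 → p y = 0) :
    (∑ y, R y * p y - c * ∑ y, R y * q y) ^ 2 ≤
      c * (1 / 2 * ∑ y, p y * (Real.log (p y) - Real.log c - Real.log (q y)))
    ∧ 0 ≤ ∑ y, p y * (Real.log (p y) - Real.log c - Real.log (q y)) := by
  have hc : 0 ≤ c := hp1 ▸ Finset.sum_nonneg fun y _ => hp y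
  rcases eq_or_lt_of_le hc with h0 | h0
  · have : ∀ y, p y = 0 := by
      intro y
      rw [← h0] at hp1
      exact (Finset.sum_eq_zero_iff_of_nonneg (fun y _ => hp y)).1 hp1 y (Finset.mem_univ y)
    simp [this, ← h0]
  · have h := pinsker_fin R l hR (fun y => p y / c) q (fun y => div_nonneg (hp y) hc) hq
      (by rw [← Finset.sum_div, hp1, div_self h0.ne']) hq1 (fun y hy => by simp [hac y hy])
    have e1 : ∑ y, p y * (Real.log (p y) - Real.log c - Real.log (q y)) =
        c * ∑ y, p y / c * (Real.log (p y / c) - Real.log (q y)) := by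
      rw [Finset.mul_sum]
      refine Finset.sum_congr rfl fun y _ => ?_
      rcases eq_or_lt_of_le (hp y) with h1 | h1
      · simp [← h1]
      · rw [Real.log_div h1.ne' h0.ne']
        field_simp
    have e2 : ∑ y, R y * p y = c * ∑ y, R y * (p y / c) := by
      rw [Finset.mul_sum]
      refine Finset.sum_congr rfl fun y _ => ?_
      field_simp
    rw [e1, e2]
    set S := ∑ y, p y / c * (Real.log (p y / c) - Real.log (q y))
    set U := ∑ y, R y * (p y / c)
    set V := ∑ y, R y * q y
    constructor
    · have := mul_le_mul_of_nonneg_left h (sq_nonneg c)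
      nlinarith
    · have : 0 ≤ S := by nlinarith [sq_nonneg (U - V)]
      positivity

lemma step_fin {𝒜 𝒴 : Type*} [Fintype 𝒜] [Fintype 𝒴] (R : 𝒴 → ℝ) (l : ℝ)
    (hR : ∀ y, R y ∈ Set.Icc l (l + 1)) (α : 𝒜 → ℝ) (P : 𝒜 → 𝒜 → 𝒴 → ℝ)
    (hP : ∀ a b y, 0 ≤ P a b y) (hα : ∀ a b, ∑ y, P a b y = α b) (h1 : ∑ b, α b = 1)
    (m : ℝ) (hm : 0 ≤ m) :
    (m * ∑ a, (∑ y, R y * P a a y - α a * ∑ y, R y * ∑ b, P a b y)) ^ 2 ≤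
      m * ((Fintype.card 𝒜 : ℝ) / 2 * (∑ b, negMulLog (m * α b) - negMulLog m
        - ∑ a, ∑ y, (∑ b, negMulLog (m * (α a * P a b y))
            - negMulLog (m * (α a * ∑ b, P a b y)))))
    ∧ 0 ≤ ∑ b, negMulLog (m * α b) - negMulLog m
        - ∑ a, ∑ y, (∑ b, negMulLog (m * (α a * P a b y))
            - negMulLog (m * (α a * ∑ b, P a b y))) := by
  have hα0 : ∀ b, 0 ≤ α b := fun b => by
    rw [← hα b b]; exact Finset.sum_nonneg fun y _ => hP b b y
  have hQ1 : ∀ a, ∑ y, ∑ b, P a b y = 1 := fun a => by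
    rw [Finset.sum_comm]; simp_rw [hα]; exact h1
  have hpin := fun a b => pinsker_fin' R l hR (P a b) (fun y => ∑ b, P a b y) (α b) (hP a b)
    (fun y => Finset.sum_nonneg fun b _ => hP a b y) (hα a b) (hQ1 a)
    (fun y hy => (Finset.sum_eq_zero_iff_of_nonneg (fun b _ => hP a b y)).1 hy b
      (Finset.mem_univ b))
  set K : 𝒜 → 𝒜 → ℝ := fun a b => ∑ y, P a b y * (Real.log (P a b y) - Real.log (α b)
    - Real.log (∑ b, P a b y)) with hK
  -- identity
  have hid : (∑ b, negMulLog (m * α b) - negMulLog m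
        - ∑ a, ∑ y, (∑ b, negMulLog (m * (α a * P a b y))
            - negMulLog (m * (α a * ∑ b, P a b y)))) = m * ∑ a, α a * ∑ b, K a b := by
    have eK : ∀ a, ∑ b, K a b = ∑ b, negMulLog (α b) - ∑ y, (∑ b, negMulLog (P a b y)
        - negMulLog (∑ b, P a b y)) := by
      intro a
      have : ∀ b, K a b = negMulLog (α b) + ∑ y, (- negMulLog (P a b y)
          - P a b y * Real.log (∑ b, P a b y)) := by
        intro b
        simp only [hK]
        rw [negMulLog, ← hα a b, neg_mul, Finset.sum_mul, ← Finset.sum_neg_distrib,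
          ← Finset.sum_add_distrib]
        refine Finset.sum_congr rfl fun y _ => ?_
        rw [negMulLog]; ring
      simp_rw [this]
      rw [Finset.sum_add_distrib, Finset.sum_comm, sub_eq_add_neg, ← Finset.sum_neg_distrib]
      congr 1
      refine Finset.sum_congr rfl fun y _ => ?_
      rw [Finset.sum_sub_distrib, ← Finset.sum_mul, Finset.sum_neg_distrib]
      have : negMulLog (∑ b, P a b y) = -(∑ b, P a b y) * Real.log (∑ b, P a b y) := rfl
      rw [this]; ring
    have e2 : ∑ b, negMulLog (m * α b) = negMulLog m + m * ∑ b, negMulLog (α b) := by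
      simp_rw [negMulLog_mul]
      rw [Finset.sum_add_distrib, ← Finset.sum_mul, h1, one_mul, Finset.mul_sum]
    have e3 : ∀ a y, ∑ b, negMulLog (m * (α a * P a b y))
            - negMulLog (m * (α a * ∑ b, P a b y)) =
          m * (α a * (∑ b, negMulLog (P a b y) - negMulLog (∑ b, P a b y))) := by
      intro a y
      simp_rw [negMulLog_mul]
      simp only [Finset.sum_add_distrib, ← Finset.sum_mul, ← Finset.mul_sum]
      ring
    simp_rw [e3, e2, eK]
    simp only [← Finset.mul_sum]
    simp only [mul_sub, Finset.sum_sub_distrib, ← Finset.sum_mul, h1]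
    ring
  rw [hid]
  refine ⟨?_, mul_nonneg hm (Finset.sum_nonneg fun a _ => mul_nonneg (hα0 a)
    (Finset.sum_nonneg fun b _ => (hpin a b).2))⟩
  have hcs : (∑ a, (∑ y, R y * P a a y - α a * ∑ y, R y * ∑ b, P a b y)) ^ 2 ≤
      (Fintype.card 𝒜 : ℝ) / 2 * ∑ a, α a * ∑ b, K a b := by
    calc _ ≤ (Fintype.card 𝒜 : ℝ) * ∑ a, (∑ y, R y * P a a y - α a * ∑ y, R y * ∑ b, P a b y) ^ 2 :=
          sq_sum_le_card_mul_sum_sq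
      _ ≤ (Fintype.card 𝒜 : ℝ) * ∑ a, (α a * (1 / 2 * ∑ b, K a b)) := by
          gcongr with a _
          refine (hpin a a).1.trans ?_
          have := hα0 a
          gcongr
          exact Finset.single_le_sum (f := fun b => K a b) (fun b _ => (hpin a b).2)
            (Finset.mem_univ a)
      _ = _ := by
          rw [Finset.mul_sum, Finset.mul_sum]
          refine Finset.sum_congr rfl fun a _ => ?_
          ring
  have := mul_le_mul_of_nonneg_left hcs (sq_nonneg m)
  nlinarith

lemma sum_real_inter {Ω : Type*} [MeasurableSpace Ω] (ν : Measure Ω) [IsFiniteMeasure ν]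
    {𝒳 : Type*} [Fintype 𝒳] (X : Ω → 𝒳) (hX : ∀ x, MeasurableSet {ω | X ω = x})
    (S : Set Ω) : ∑ x, ν.real (S ∩ {ω | X ω = x}) = ν.real S := by
  have h := sum_measureReal_preimage_singleton (μ := ν.restrict S) (f := X) Finset.univ
    (fun x _ => hX x)
  simp only [Finset.coe_univ, Set.preimage_univ, measureReal_restrict_apply_univ] at h
  rw [← h]
  refine Finset.sum_congr rfl fun x _ => ?_
  rw [Set.inter_comm]
  exact (measureReal_restrict_apply (hX x)).symm

lemma integral_fin {Ω : Type*} [MeasurableSpace Ω] (μ : Measure Ω) [IsFiniteMeasure μ]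
    {𝒳 : Type*} [Fintype 𝒳] (X : Ω → 𝒳) (hX : ∀ x, MeasurableSet {ω | X ω = x})
    (g : 𝒳 → ℝ) : Integrable (fun ω => g (X ω)) μ ∧
      ∫ ω, g (X ω) ∂μ = ∑ x, g x * μ.real {ω | X ω = x} := by
  let _ : MeasurableSpace 𝒳 := ⊤
  have _ : MeasurableSingletonClass 𝒳 := ⟨fun _ => trivial⟩
  have hXm : Measurable X := measurable_to_countable' hX
  constructor
  · exact (Integrable.of_finite (μ := μ.map X) (f := g)).comp_measurable hXm
  · rw [← integral_map (f := g) hXm.aemeasurable (measurable_of_finite g).aestronglyMeasurable,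
      integral_fintype Integrable.of_finite]
    refine Finset.sum_congr rfl fun x _ => ?_
    rw [map_measureReal_apply hXm (measurableSet_singleton x), smul_eq_mul, mul_comm]
    rfl

/-- One period, conditioned on the event `E`, in unnormalized form. -/
lemma step_meas {Ω : Type*} [MeasurableSpace Ω] (μ : Measure Ω) [IsProbabilityMeasure μ]
    {𝒜 𝒴 Θ : Type*} [Fintype 𝒜] [Fintype 𝒴] [Fintype Θ]
    [MeasurableSpace 𝒜] [MeasurableSingletonClass 𝒜]
    [MeasurableSpace 𝒴] [MeasurableSingletonClass 𝒴]
    [MeasurableSpace Θ] [MeasurableSingletonClass Θ]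
    (R : 𝒴 → ℝ) (l : ℝ) (hR : ∀ y, R y ∈ Set.Icc l (l + 1))
    (θstar : Ω → Θ) (hθ : Measurable θstar) (g : Θ → 𝒜)
    (Y : 𝒜 → Ω → 𝒴) (hY : ∀ a, Measurable (Y a)) (A : Ω → 𝒜)
    (E : Set Ω) (hE : MeasurableSet E)
    (hTS : μ E ≠ 0 → (∀ a, μ[|E] {ω | A ω = a} = μ[|E] {ω | g (θstar ω) = a}) ∧
      IndepFun A (fun ω => (θstar ω, fun a => Y a ω)) (μ[|E])) :
    (∑ a, ∑ y, R y * μ.real (E ∩ {ω | g (θstar ω) = a ∧ Y a ω = y})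
      - ∑ a, ∑ y, R y * μ.real (E ∩ {ω | A ω = a ∧ Y a ω = y})) ^ 2 ≤
      μ.real E * ((Fintype.card 𝒜 : ℝ) / 2 *
        (∑ b, negMulLog (μ.real (E ∩ {ω | g (θstar ω) = b})) - negMulLog (μ.real E)
        - ∑ a, ∑ y, (∑ b, negMulLog (μ.real (E ∩ {ω | A ω = a ∧ Y a ω = y} ∩
            {ω | g (θstar ω) = b}))
            - negMulLog (μ.real (E ∩ {ω | A ω = a ∧ Y a ω = y})))))
    ∧ 0 ≤ ∑ b, negMulLog (μ.real (E ∩ {ω | g (θstar ω) = b})) - negMulLog (μ.real E)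
        - ∑ a, ∑ y, (∑ b, negMulLog (μ.real (E ∩ {ω | A ω = a ∧ Y a ω = y} ∩
            {ω | g (θstar ω) = b}))
            - negMulLog (μ.real (E ∩ {ω | A ω = a ∧ Y a ω = y}))) := by
  classical
  by_cases h0 : μ E = 0
  · have hz : ∀ S : Set Ω, μ.real (E ∩ S) = 0 := fun S =>
      measureReal_mono_null Set.inter_subset_left (by simp [measureReal_def, h0])
    have hz' : μ.real E = 0 := by simp [measureReal_def, h0]
    simp [hz, hz', Set.inter_assoc]
  obtain ⟨hdist, hind⟩ := hTS h0
  have : IsProbabilityMeasure (μ[|E]) := cond_isProbabilityMeasure h0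
  set ν := μ[|E] with hν
  have hmul : ∀ S : Set Ω, μ.real (E ∩ S) = μ.real E * ν.real S := by
    intro S
    rw [hν, measureReal_def, measureReal_def, measureReal_def, cond_apply hE, ENNReal.toReal_mul,
      ENNReal.toReal_inv, ← mul_assoc, mul_inv_cancel₀, one_mul]
    exact ENNReal.toReal_ne_zero.2 ⟨h0, measure_ne_top _ _⟩
  have hgm : Measurable (fun ω => g (θstar ω)) := (measurable_of_finite g).comp hθ
  set P : 𝒜 → 𝒜 → 𝒴 → ℝ := fun a b y => ν.real {ω | g (θstar ω) = b ∧ Y a ω = y} with hP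
  set α : 𝒜 → ℝ := fun b => ν.real {ω | g (θstar ω) = b} with hα
  have hYs : ∀ a y, MeasurableSet {ω | Y a ω = y} := fun a y => hY a (measurableSet_singleton y)
  have hgs : ∀ b, MeasurableSet {ω | g (θstar ω) = b} := fun b => hgm (measurableSet_singleton b)
  have hPQ : ∀ a y, ∑ b, P a b y = ν.real {ω | Y a ω = y} := by
    intro a y
    rw [← sum_real_inter ν (fun ω => g (θstar ω)) hgs {ω | Y a ω = y}]
    refine Finset.sum_congr rfl fun b _ => ?_
    simp only [hP]
    congr 1
    ext ω
    simp [and_comm]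
  have hPα : ∀ a b, ∑ y, P a b y = α b := by
    intro a b
    rw [hα]
    simp only
    rw [← sum_real_inter ν (Y a) (hYs a) {ω | g (θstar ω) = b}]
    rfl
  have hα1 : ∑ b, α b = 1 := by
    have := sum_real_inter ν (fun ω => g (θstar ω)) hgs Set.univ
    simpa using this
  have hA : ∀ a, ν.real {ω | A ω = a} = α a := fun a => by
    simp only [hα, measureReal_def, hdist a]
  have hprod : ∀ (a : 𝒜) (S : Set (Θ × (𝒜 → 𝒴))),
      ν.real ({ω | A ω = a} ∩ {ω | (θstar ω, fun a => Y a ω) ∈ S}) =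
        α a * ν.real {ω | (θstar ω, fun a => Y a ω) ∈ S} := by
    intro a S
    have := hind.measure_inter_preimage_eq_mul {a} S (measurableSet_singleton a)
      (Set.toFinite S).measurableSet
    rw [← hA a, measureReal_def, measureReal_def, measureReal_def, ← ENNReal.toReal_mul]
    exact congrArg ENNReal.toReal this
  have hAY : ∀ a y, μ.real (E ∩ {ω | A ω = a ∧ Y a ω = y}) =
      μ.real E * (α a * ∑ b, P a b y) := by
    intro a y
    rw [hmul, hPQ]
    congr 1
    exact hprod a {z | z.2 a = y}
  have hAYb : ∀ a y b, μ.real (E ∩ {ω | A ω = a ∧ Y a ω = y} ∩ {ω | g (θstar ω) = b}) =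
      μ.real E * (α a * P a b y) := by
    intro a y b
    rw [Set.inter_assoc, hmul]
    congr 1
    have := hprod a {z | g z.1 = b ∧ z.2 a = y}
    simp only [hP]
    refine Eq.trans ?_ this
    congr 1
    ext ω
    simp only [Set.mem_inter_iff, Set.mem_ofPred_eq]
    tauto
  have hstep := step_fin R l hR α P (fun _ _ _ => measureReal_nonneg) hPα hα1 (μ.real E)
    measureReal_nonneg
  simp only [hAY, hAYb]
  have e1 : ∀ a y, μ.real (E ∩ {ω | g (θstar ω) = a ∧ Y a ω = y}) = μ.real E * P a a y :=
    fun a y => hmul _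
  have e2 : ∀ b, μ.real (E ∩ {ω | g (θstar ω) = b}) = μ.real E * α b := fun b => hmul _
  simp only [e1, e2]
  refine ⟨le_trans (le_of_eq ?_) hstep.1, hstep.2⟩
  congr 1
  rw [Finset.mul_sum, ← Finset.sum_sub_distrib]
  refine Finset.sum_congr rfl fun a _ => ?_
  rw [mul_sub, Finset.mul_sum, Finset.mul_sum, Finset.mul_sum]
  congr 1
  · exact Finset.sum_congr rfl fun y _ => by ring
  · exact Finset.sum_congr rfl fun y _ => by ring

/-- **Worst-case regret bound for Thompson sampling**: combining Proposition 1
with Proposition 3 yields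
`Σ_{t<T} E[R(Y_{t,A*}) − R(Y_{t,A_t})] ≤ √(|𝒜| · H(A*) · T / 2)`.

Setup: `θ*` is a random parameter in a finite set `Θ`; given `θ* = θ` the
outcome vectors `(Y_t)` are i.i.d. with law `p θ`; `A*` is a `σ(θ*)`-measurable
optimal action; and at every period `t`, conditioned on any positive-probability
history `(A_0, Y_{0,A_0}, …, A_{t-1}, Y_{t-1,A_{t-1}})`, the action `A_t` is
independent of `(θ*, Y_t)` and is distributed as the posterior distribution of
`A*` (Thompson sampling). -/
theorem thompson_sampling_regret_le_worst_case
    {Ω : Type*} [MeasurableSpace Ω] (μ : Measure Ω) [IsProbabilityMeasure μ]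
    {𝒜 𝒴 Θ : Type*} [Fintype 𝒜] [Nonempty 𝒜] [Fintype 𝒴] [Nonempty 𝒴]
    [Fintype Θ] [Nonempty Θ]
    [MeasurableSpace 𝒜] [MeasurableSingletonClass 𝒜]
    [MeasurableSpace 𝒴] [MeasurableSingletonClass 𝒴]
    [MeasurableSpace Θ] [MeasurableSingletonClass Θ]
    (R : 𝒴 → ℝ) (hR : (⨆ y, R y) - (⨅ y, R y) ≤ 1)
    (θstar : Ω → Θ) (hθstarMeas : Measurable θstar)
    (p : Θ → PMF (𝒜 → 𝒴))
    (Y : ℕ → 𝒜 → Ω → 𝒴) (hYmeas : ∀ t a, Measurable (Y t a))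
    -- conditionally i.i.d. given `θ*`, with conditional law `p θ*`
    (hiid : ∀ θ : Θ, μ {ω | θstar ω = θ} ≠ 0 →
      ∀ (s : Finset ℕ) (f : ℕ → 𝒜 → 𝒴),
        (μ[|{ω | θstar ω = θ}]) {ω | ∀ t ∈ s, (fun a => Y t a ω) = f t} =
          ∏ t ∈ s, p θ (f t))
    (Astar : Ω → 𝒜)
    -- `A*` is `σ(θ*)`-measurable
    (hAstarFn : ∃ g : Θ → 𝒜, ∀ ω, Astar ω = g (θstar ω))
    -- `A*` maximizes `E[R(Y_{1,a}) | θ*]`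
    (hopt : ∀ θ : Θ, μ {ω | θstar ω = θ} ≠ 0 → ∀ ω ∈ {ω | θstar ω = θ},
      ∀ a : 𝒜,
        ∫ ω', R (Y 0 a ω') ∂(μ[|{ω' | θstar ω' = θ}]) ≤
          ∫ ω', R (Y 0 (Astar ω) ω') ∂(μ[|{ω' | θstar ω' = θ}]))
    (A : ℕ → Ω → 𝒜) (hAmeas : ∀ t, Measurable (A t))
    -- Thompson sampling: conditioned on every positive-probability history,
    -- `A_t` is independent of `(θ*, Y_t)` and distributed as `A*`
    (hTS : ∀ (t : ℕ) (h : Fin t → 𝒜 × 𝒴),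
      μ {ω | ∀ s : Fin t,
          A (s : ℕ) ω = (h s).1 ∧ Y (s : ℕ) ((h s).1) ω = (h s).2} ≠ 0 →
        (∀ a : 𝒜,
          (μ[|{ω | ∀ s : Fin t,
              A (s : ℕ) ω = (h s).1 ∧ Y (s : ℕ) ((h s).1) ω = (h s).2}])
              {ω | A t ω = a} =
            (μ[|{ω | ∀ s : Fin t,
                A (s : ℕ) ω = (h s).1 ∧ Y (s : ℕ) ((h s).1) ω = (h s).2}])
              {ω | Astar ω = a}) ∧
        IndepFun (A t) (fun ω => (θstar ω, fun a => Y t a ω))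
          (μ[|{ω | ∀ s : Fin t,
              A (s : ℕ) ω = (h s).1 ∧ Y (s : ℕ) ((h s).1) ω = (h s).2}]))
    (T : ℕ) :
    ∑ t ∈ Finset.range T,
        ∫ ω, (R (Y t (Astar ω) ω) - R (Y t (A t ω) ω)) ∂μ ≤
      Real.sqrt ((Fintype.card 𝒜 : ℝ) * entropy μ Astar * T / 2) := by
  classical
  obtain ⟨g, hg⟩ := hAstarFn
  obtain rfl : Astar = fun ω => g (θstar ω) := funext hg
  set l := ⨅ y, R y with hl
  have hRl : ∀ y, R y ∈ Set.Icc l (l + 1) := fun y =>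
    ⟨ciInf_le (Set.finite_range R).bddBelow y, by
      have := le_ciSup (Set.finite_range R).bddAbove y
      linarith⟩
  set E : (t : ℕ) → (Fin t → 𝒜 × 𝒴) → Set Ω := fun t h =>
    {ω | ∀ s : Fin t, A (s : ℕ) ω = (h s).1 ∧ Y (s : ℕ) ((h s).1) ω = (h s).2} with hEdef
  have hgm : Measurable (fun ω => g (θstar ω)) := (measurable_of_finite g).comp hθstarMeas
  have hAs : ∀ t a, MeasurableSet {ω | A t ω = a} := fun t a =>
    hAmeas t (measurableSet_singleton a)
  have hYs : ∀ t a y, MeasurableSet {ω | Y t a ω = y} := fun t a y =>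
    hYmeas t a (measurableSet_singleton y)
  have hgs : ∀ b, MeasurableSet {ω | g (θstar ω) = b} := fun b => hgm (measurableSet_singleton b)
  have hEm : ∀ t h, MeasurableSet (E t h) := by
    intro t h
    have : E t h = ⋂ s : Fin t, {ω | A (s : ℕ) ω = (h s).1} ∩
        {ω | Y (s : ℕ) ((h s).1) ω = (h s).2} := by
      ext ω; simp [hEdef]
    rw [this]
    exact MeasurableSet.iInter fun s => (hAs _ _).inter (hYs _ _ _)
  -- histories as a random variable
  let Hst : (t : ℕ) → Ω → (Fin t → 𝒜 × 𝒴) := fun t ω s => (A s ω, Y s (A s ω) ω)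
  have hHst : ∀ t h, {ω | Hst t ω = h} = E t h := by
    intro t h
    ext ω
    simp only [hEdef, Set.mem_ofPred_eq, funext_iff, Hst, Prod.ext_iff]
    refine forall_congr' fun s => ⟨fun ⟨h1, h2⟩ => ⟨h1, h1 ▸ h2⟩, fun ⟨h1, h2⟩ => ⟨h1, ?_⟩⟩
    rw [h1]; exact h2
  have hHm : ∀ t h, MeasurableSet {ω | Hst t ω = h} := fun t h => hHst t h ▸ hEm t h
  have hEsum : ∀ t, ∑ h, μ.real (E t h) = 1 := by
    intro t
    have := sum_real_inter μ (Hst t) (hHm t) Set.univ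
    simpa [hHst] using this
  -- integrals
  have hInt : ∀ (t : ℕ) (X : Ω → 𝒜), (∀ a, MeasurableSet {ω | X ω = a}) →
      Integrable (fun ω => R (Y t (X ω) ω)) μ ∧ ∫ ω, R (Y t (X ω) ω) ∂μ =
        ∑ h, ∑ a, ∑ y, R y * μ.real (E t h ∩ {ω | X ω = a ∧ Y t a ω = y}) := by
    intro t X hX
    have hset : ∀ z : (Fin t → 𝒜 × 𝒴) × 𝒜 × 𝒴,
        {ω | (Hst t ω, X ω, Y t (X ω) ω) = z} =
          E t z.1 ∩ {ω | X ω = z.2.1 ∧ Y t z.2.1 ω = z.2.2} := by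
      rintro ⟨h, a, y⟩
      rw [← hHst]
      ext ω
      simp only [Set.mem_ofPred_eq, Set.mem_inter_iff, Prod.mk.injEq]
      constructor
      · rintro ⟨h1, h2, h3⟩; exact ⟨h1, h2, h2 ▸ h3⟩
      · rintro ⟨h1, h2, h3⟩; exact ⟨h1, h2, by rw [h2]; exact h3⟩
    have := integral_fin μ (fun ω => (Hst t ω, X ω, Y t (X ω) ω))
      (fun z => by
        rw [hset]
        exact (hEm _ _).inter ((hX _).inter (hYs _ _ _)))
      (fun z => R z.2.2)
    refine ⟨this.1, this.2.trans ?_⟩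
    rw [Fintype.sum_prod_type]
    refine Finset.sum_congr rfl fun h _ => ?_
    rw [Fintype.sum_prod_type]
    refine Finset.sum_congr rfl fun a _ => Finset.sum_congr rfl fun y _ => ?_
    rw [hset]
  -- conditional entropy
  let Φ : ℕ → ℝ := fun t => ∑ h, (∑ b, negMulLog (μ.real (E t h ∩ {ω | g (θstar ω) = b}))
    - negMulLog (μ.real (E t h)))
  let ρ : (t : ℕ) → (Fin t → 𝒜 × 𝒴) → ℝ := fun t h =>
    ∑ a, ∑ y, R y * μ.real (E t h ∩ {ω | g (θstar ω) = a ∧ Y t a ω = y})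
      - ∑ a, ∑ y, R y * μ.real (E t h ∩ {ω | A t ω = a ∧ Y t a ω = y})
  let D : (t : ℕ) → (Fin t → 𝒜 × 𝒴) → ℝ := fun t h =>
    ∑ b, negMulLog (μ.real (E t h ∩ {ω | g (θstar ω) = b})) - negMulLog (μ.real (E t h))
        - ∑ a, ∑ y, (∑ b, negMulLog (μ.real (E t h ∩ {ω | A t ω = a ∧ Y t a ω = y} ∩
            {ω | g (θstar ω) = b}))
            - negMulLog (μ.real (E t h ∩ {ω | A t ω = a ∧ Y t a ω = y})))
  have hstep : ∀ t h, (ρ t h) ^ 2 ≤ μ.real (E t h) * ((Fintype.card 𝒜 : ℝ) / 2 * D t h) ∧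
      0 ≤ D t h := fun t h =>
    step_meas μ R l hRl θstar hθstarMeas g (Y t) (hYmeas t) (A t) (E t h) (hEm t h) (hTS t h)
  have hρ : ∀ t, ∫ ω, (R (Y t (g (θstar ω)) ω) - R (Y t (A t ω) ω)) ∂μ = ∑ h, ρ t h := by
    intro t
    have i1 := hInt t (fun ω => g (θstar ω)) hgs
    have i2 := hInt t (A t) (hAs t)
    rw [integral_sub i1.1 i2.1, i1.2, i2.2, ← Finset.sum_sub_distrib]
  have hD : ∀ t, ∑ h, D t h = Φ t - Φ (t + 1) := by
    intro t
    simp only [D, Φ]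
    rw [Finset.sum_sub_distrib]
    congr 1
    refine Eq.trans ?_ (Equiv.sum_comp (Fin.snocEquiv (fun _ : Fin (t + 1) => 𝒜 × 𝒴)) _)
    rw [Fintype.sum_prod_type_right]
    refine Finset.sum_congr rfl fun h _ => ?_
    rw [Fintype.sum_prod_type]
    refine Finset.sum_congr rfl fun a _ => Finset.sum_congr rfl fun y _ => ?_
    have : E (t + 1) (Fin.snocEquiv (fun _ : Fin (t + 1) => 𝒜 × 𝒴) ((a, y), h)) =
        E t h ∩ {ω | A t ω = a ∧ Y t a ω = y} := by
      ext ω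
      simp [hEdef, Fin.forall_fin_succ', Fin.snocEquiv]
    rw [this]
  have hΦ0 : Φ 0 = entropy μ (fun ω => g (θstar ω)) := by
    simp [Φ, entropy, hEdef, measureReal_def]
  have hΦT : 0 ≤ Φ T := by
    refine Finset.sum_nonneg fun h _ => ?_
    have hs := sum_real_inter μ (fun ω => g (θstar ω)) hgs (E T h)
    have hn : negMulLog (μ.real (E T h)) = ∑ b, -(μ.real (E T h ∩ {ω | g (θstar ω) = b}) *
        Real.log (μ.real (E T h))) := by
      rw [Finset.sum_neg_distrib, ← Finset.sum_mul, hs, negMulLog, neg_mul]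
    rw [hn, ← Finset.sum_sub_distrib]
    refine Finset.sum_nonneg fun b _ => ?_
    rw [negMulLog, neg_mul, sub_neg_eq_add, neg_add_eq_sub, sub_nonneg]
    rcases eq_or_lt_of_le (measureReal_nonneg (μ := μ) (s := E T h ∩ {ω | g (θstar ω) = b}))
      with h0 | h0
    · rw [← h0]; simp
    · refine mul_le_mul_of_nonneg_left (Real.log_le_log h0 ?_) h0.le
      exact measureReal_mono Set.inter_subset_left
  have hcs := Finset.sum_sq_le_sum_mul_sum_of_sq_le_mul
    (Finset.sigma (Finset.range T) (fun t => (Finset.univ : Finset (Fin t → 𝒜 × 𝒴))))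
    (r := fun z => ρ z.1 z.2) (f := fun z => μ.real (E z.1 z.2))
    (g := fun z => (Fintype.card 𝒜 : ℝ) / 2 * D z.1 z.2)
    (fun _ _ => measureReal_nonneg)
    (fun z _ => mul_nonneg (by positivity) (hstep z.1 z.2).2)
    (fun z _ => (hstep z.1 z.2).1)
  simp only [Finset.sum_sigma, hEsum, ← Finset.mul_sum, hD, Finset.sum_range_sub'] at hcs
  simp only [hρ]
  refine Real.le_sqrt_of_sq_le (hcs.trans ?_)
  rw [hΦ0]
  simp only [Finset.sum_const, Finset.card_range, nsmul_eq_mul, mul_one]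
  have : (0 : ℝ) ≤ T * (Fintype.card 𝒜 / 2) := by positivity
  nlinarith [mul_nonneg this hΦT]
end
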